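/- The Jacobi theta constant θ(τ) = Σ_{n∈ℤ} e^{πin²τ} satisfies the fourth-order nonlinear ODE: for every τ ∈ ℍ, θ³(θθ_{ττ} − 3θ_τ²)θ_{ττττ} − θ⁴θ_{τττ}² + 2θ²θ_τ(θθ_{ττ} + 12θ_τ²)θ_{τττ} + θ³θ_{ττ}³ − 24θ²θ_τ²θ_{ττ}² − 18θθ_τ⁴θ_{ττ} + 18θ_τ⁶ = 0, where subscripts denote ordinary derivatives with respect to τ. -/

import Mathlib

open Complex

noncomputable section

/-- The Jacobi theta constant `θ(τ) = Σ_{n∈ℤ} e^{πin²τ}`. -/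
def θ : ℂ → ℂ := fun τ => ∑' n : ℤ, Complex.exp (Real.pi * Complex.I * (n : ℂ) ^ 2 * τ)


namespace ThetaODE

open UpperHalfPlane hiding I
open ModularForm Filter Topology MatrixGroups

/-- The open upper half-plane as a subset of `ℂ`. -/
def U : Set ℂ := {z | 0 < z.im}

/-- The filter of neighbourhoods of `i∞`. -/
def atI : Filter ℂ := comap Complex.im atTop

lemma isOpen_U : IsOpen U := isOpen_upperHalfPlaneSet

lemma mem_add_one {τ : ℂ} (h : τ ∈ U) : τ + 1 ∈ U := by
  simpa [U] using h

lemma ne_zero_of_mem {τ : ℂ} (h : τ ∈ U) : τ ≠ 0 := by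
  rintro rfl
  simp [U] at h

lemma mem_S {τ : ℂ} (h : τ ∈ U) : -1 / τ ∈ U := by
  have h0 : 0 < Complex.normSq τ := Complex.normSq_pos.mpr (ne_zero_of_mem h)
  have : 0 < τ.im := h
  simp only [U, Set.mem_ofPred_eq, neg_div, Complex.neg_im, one_div, Complex.inv_im]
  have := div_pos this h0
  simpa [neg_div] using this

lemma atI_neBot : atI.NeBot := by
  unfold atI
  refine comap_neBot_iff_frequently.mpr (Eventually.frequently ?_)
  exact Eventually.of_forall fun y => ⟨y * I, by simp⟩

lemma eventually_U : ∀ᶠ τ in atI, τ ∈ U :=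
  preimage_mem_comap (Ioi_mem_atTop 0)

lemma tendsto_add_one : Tendsto (fun τ : ℂ => τ + 1) atI atI := by
  unfold atI
  rw [tendsto_comap_iff]
  have : (Complex.im ∘ fun τ : ℂ => τ + 1) = Complex.im := by
    ext τ; simp
  rw [this]
  exact tendsto_comap

/-- A level one cusp form built from a function on the half-plane. -/
lemma exists_cusp (k : ℕ) (f : ℂ → ℂ) (hd : DifferentiableOn ℂ f U)
    (hT : ∀ τ ∈ U, f (τ + 1) = f τ) (hS : ∀ τ ∈ U, f (-1 / τ) = τ ^ k * f τ)
    (h0 : Tendsto f atI (𝓝 0)) :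
    ∃ F : CuspForm 𝒮ℒ (k : ℤ), ∀ z : ℍ, F z = f z := by
  have hTs : (fun z : ℍ => f z) ∣[(k : ℤ)] ModularGroup.T = fun z : ℍ => f z := by
    ext z
    rw [SL_slash_apply, ModularGroup.denom_apply, modular_T_smul]
    have := hT z z.2
    simp [ModularGroup.T, add_comm (1 : ℂ), this]
  have hSs : (fun z : ℍ => f z) ∣[(k : ℤ)] ModularGroup.S = fun z : ℍ => f z := by
    ext z
    rw [SL_slash_apply, ModularGroup.denom_S, modular_S_smul]
    have := hS z z.2
    rw [neg_div, one_div] at this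
    have hz : (z : ℂ) ≠ 0 := z.ne_zero
    simp [this]
    field_simp
  have hall := SlashInvariantForm.slash_action_generators_SL2Z hSs hTs
  refine ⟨{ toFun := fun z : ℍ => f z
            slash_action_eq' := ?_
            holo' := ?_
            zero_at_cusps' := ?_ }, fun z => rfl⟩
  · intro A hA
    obtain ⟨A, rfl⟩ := hA
    exact hall A
  · rw [UpperHalfPlane.mdifferentiable_iff]
    refine hd.congr fun z hz => ?_
    have hz' : 0 < z.im := hz
    simp [ofComplex_apply_of_im_pos hz']
  · intro c hc
    rw [Subgroup.IsArithmetic.isCusp_iff_isCusp_SL2Z] at hc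
    rw [OnePoint.isZeroAt_iff_forall_SL2Z hc]
    intro γ _
    have := hall γ
    change IsZeroAtImInfty ((fun z : ℍ => f z) ∣[(k : ℤ)] γ)
    rw [this]
    exact h0.comp tendsto_coe_atImInfty

lemma cusp_zero (k : ℕ) (hk : k < 12) (f : ℂ → ℂ) (hd : DifferentiableOn ℂ f U)
    (hT : ∀ τ ∈ U, f (τ + 1) = f τ) (hS : ∀ τ ∈ U, f (-1 / τ) = τ ^ k * f τ)
    (h0 : Tendsto f atI (𝓝 0)) : ∀ τ ∈ U, f τ = 0 := by
  obtain ⟨F, hF⟩ := exists_cusp k f hd hT hS h0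
  intro τ hτ
  have hz := rank_zero_iff_forall_zero.mp
    (CuspForm.rank_eq_zero_of_weight_lt_twelve (k := (k : ℤ)) (by exact_mod_cast hk)) F
  have := hF ⟨τ, hτ⟩
  rw [hz] at this
  exact this.symm

lemma cusp_twelve (f : ℂ → ℂ) (hd : DifferentiableOn ℂ f U)
    (hT : ∀ τ ∈ U, f (τ + 1) = f τ) (hS : ∀ τ ∈ U, f (-1 / τ) = τ ^ 12 * f τ)
    (h0 : Tendsto f atI (𝓝 0)) (hne : ∃ τ ∈ U, f τ ≠ 0) : ∀ τ ∈ U, f τ ≠ 0 := by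
  obtain ⟨F, hF⟩ := exists_cusp 12 f hd hT hS h0
  obtain ⟨c, hc⟩ := CuspForm.exists_smul_discriminant_of_weight_eq_twelve F
  have key : ∀ τ (h : τ ∈ U), f τ = c * ModularForm.discriminant ⟨τ, h⟩ := by
    intro τ h
    have := hF ⟨τ, h⟩
    rw [← hc] at this
    exact this.symm
  have hc0 : c ≠ 0 := by
    rintro rfl
    obtain ⟨τ, h, hn⟩ := hne
    exact hn (by rw [key τ h, zero_mul])
  intro τ h
  rw [key τ h]
  exact mul_ne_zero hc0 (discriminant_ne_zero _)

/-- Cauchy estimate: if `f` has a limit at `i∞`, its derivative tends to `0`. -/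
lemma tendsto_deriv (f : ℂ → ℂ) (c : ℂ) (hd : DifferentiableOn ℂ f U)
    (h : Tendsto f atI (𝓝 c)) : Tendsto (deriv f) atI (𝓝 0) := by
  rw [Metric.tendsto_nhds]
  intro ε hε
  have h1 := (Metric.tendsto_nhds.mp h) (ε / 2) (half_pos hε)
  unfold atI at h1 ⊢
  rw [eventually_comap, eventually_atTop] at h1 ⊢
  obtain ⟨A, hA⟩ := h1
  refine ⟨max A 0 + 2, ?_⟩
  rintro _ hb τ rfl
  have hA2 : A + 2 ≤ τ.im := by linarith [le_max_left A 0]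
  have h02 : 2 ≤ τ.im := by linarith [le_max_right A 0]
  have him : ∀ w ∈ Metric.closedBall τ 1, τ.im - 1 ≤ w.im := by
    intro w hw
    have h3 : |(w - τ).im| ≤ 1 := (abs_im_le_norm _).trans (by simpa [dist_eq_norm] using hw)
    rw [sub_im] at h3
    linarith [(abs_le.mp h3).1]
  have hsub : Metric.closedBall τ 1 ⊆ U := fun w hw => by
    have := him w hw
    change 0 < w.im
    linarith
  have hd1 : DiffContOnCl ℂ (fun w => f w - c) (Metric.ball τ 1) := by
    apply DifferentiableOn.diffContOnCl
    rw [closure_ball _ one_ne_zero]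
    exact (hd.mono hsub).sub_const c
  have h4 : ‖deriv (fun w => f w - c) τ‖ ≤ (ε / 2) / 1 := by
    refine norm_deriv_le_of_forall_mem_sphere_norm_le one_pos hd1 ?_
    intro w hw
    have := him w (Metric.sphere_subset_closedBall hw)
    have := hA w.im (by linarith) w rfl
    rw [dist_eq_norm] at this
    exact this.le
  rw [deriv_sub_const] at h4
  rw [dist_zero_right]
  linarith

lemma hasDerivAt_S {τ : ℂ} (h : τ ∈ U) : HasDerivAt (fun z : ℂ => -1 / z) (1 / τ ^ 2) τ := by
  have h0 := ne_zero_of_mem h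
  have := (hasDerivAt_inv h0).neg
  convert! this using 1
  · ext z; simp [neg_div]
  · simp

lemma deriv_T {f g : ℂ → ℂ} (h : ∀ τ ∈ U, f (τ + 1) = g τ) {τ : ℂ} (hτ : τ ∈ U) :
    deriv f (τ + 1) = deriv g τ := by
  rw [← deriv_comp_add_const]
  exact EventuallyEq.deriv_eq (eventually_of_mem (isOpen_U.mem_nhds hτ) h)

lemma deriv_S {f g : ℂ → ℂ} {τ : ℂ} (hτ : τ ∈ U) (hd : DifferentiableOn ℂ f U)
    (h : ∀ τ ∈ U, f (-1 / τ) = g τ)  :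
    deriv f (-1 / τ) = τ ^ 2 * deriv g τ := by
  have h0 := ne_zero_of_mem hτ
  have h1 : HasDerivAt (fun z => f (-1 / z)) (deriv f (-1 / τ) * (1 / τ ^ 2)) τ :=
    HasDerivAt.comp τ ((hd.differentiableAt (isOpen_U.mem_nhds (mem_S hτ))).hasDerivAt)
      (hasDerivAt_S hτ)
  have h2 : deriv (fun z => f (-1 / z)) τ = deriv g τ :=
    EventuallyEq.deriv_eq (eventually_of_mem (isOpen_U.mem_nhds hτ) h)
  rw [← h2, h1.deriv]
  field_simp

/-- derivative transformation for weight two quasi-modular functions -/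
lemma deriv_S_two {p q : ℂ → ℂ} {τ : ℂ} (hτ : τ ∈ U) (hp : DifferentiableOn ℂ p U)
    (hq : DifferentiableOn ℂ q U)
    (h : ∀ τ ∈ U, p (-1 / τ) = τ ^ 2 * q τ + τ / 2) :
    deriv p (-1 / τ) = τ ^ 4 * deriv q τ + 2 * τ ^ 3 * q τ + τ ^ 2 / 2 := by
  rw [deriv_S hτ hp h]
  have h1 : HasDerivAt (fun τ : ℂ => τ ^ 2 * q τ + τ / 2)
      ((2 * τ) * q τ + τ ^ 2 * deriv q τ + 1 / 2) τ := by
    have := (((hasDerivAt_id τ).pow 2).mul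
      (hq.differentiableAt (isOpen_U.mem_nhds hτ)).hasDerivAt).add ((hasDerivAt_id τ).div_const 2)
    convert! this using 1
    simp
  rw [h1.deriv]
  ring

/-- logarithmic derivative transformation -/
lemma logDeriv_S {A B : ℂ → ℂ} {τ : ℂ} (hτ : τ ∈ U) (hA : DifferentiableOn ℂ A U)
    (hB : DifferentiableOn ℂ B U) (hB0 : ∀ τ ∈ U, B τ ≠ 0)
    (h : ∀ τ ∈ U, A (-1 / τ) = τ ^ 4 * B τ) :
    deriv A (-1 / τ) / (8 * A (-1 / τ)) = τ ^ 2 * (deriv B τ / (8 * B τ)) + τ / 2 := by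
  rw [deriv_S hτ hA h, h τ hτ]
  have h1 : HasDerivAt (fun τ : ℂ => τ ^ 4 * B τ) ((4 * τ ^ 3) * B τ + τ ^ 4 * deriv B τ) τ := by
    have := (((hasDerivAt_id τ).pow 4).mul
      (hB.differentiableAt (isOpen_U.mem_nhds hτ)).hasDerivAt)
    convert! this using 1
    simp
  rw [h1.deriv]
  have h0 := ne_zero_of_mem hτ
  have := hB0 τ hτ
  field_simp
  ring

lemma differentiableOn_deriv {f : ℂ → ℂ} (hf : DifferentiableOn ℂ f U) :
    DifferentiableOn ℂ (deriv f) U := hf.deriv isOpen_U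

/-- The Darboux-Halphen system from modularity. -/
theorem halphen {p₂ p₃ p₄ : ℂ → ℂ} {L : ℂ} (d₂ : DifferentiableOn ℂ p₂ U)
    (d₃ : DifferentiableOn ℂ p₃ U) (d₄ : DifferentiableOn ℂ p₄ U)
    (T₂ : ∀ τ ∈ U, p₂ (τ + 1) = p₂ τ) (T₃ : ∀ τ ∈ U, p₃ (τ + 1) = p₄ τ)
    (T₄ : ∀ τ ∈ U, p₄ (τ + 1) = p₃ τ)
    (S₂ : ∀ τ ∈ U, p₂ (-1 / τ) = τ ^ 2 * p₄ τ + τ / 2)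
    (S₃ : ∀ τ ∈ U, p₃ (-1 / τ) = τ ^ 2 * p₃ τ + τ / 2)
    (S₄ : ∀ τ ∈ U, p₄ (-1 / τ) = τ ^ 2 * p₂ τ + τ / 2)
    (l₂ : Tendsto p₂ atI (𝓝 L)) (l₃ : Tendsto p₃ atI (𝓝 0)) (l₄ : Tendsto p₄ atI (𝓝 0)) :
    ∀ τ ∈ U, deriv p₂ τ = 2 * (p₂ τ * p₃ τ + p₂ τ * p₄ τ - p₃ τ * p₄ τ) ∧
      deriv p₃ τ = 2 * (p₃ τ * p₂ τ + p₃ τ * p₄ τ - p₂ τ * p₄ τ) ∧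
      deriv p₄ τ = 2 * (p₄ τ * p₂ τ + p₄ τ * p₃ τ - p₂ τ * p₃ τ) := by
  obtain ⟨g₂, hg₂⟩ : ∃ g : ℂ → ℂ, g = fun τ =>
    deriv p₂ τ - 2 * (p₂ τ * p₃ τ + p₂ τ * p₄ τ - p₃ τ * p₄ τ) := ⟨_, rfl⟩
  obtain ⟨g₃, hg₃⟩ : ∃ g : ℂ → ℂ, g = fun τ =>
    deriv p₃ τ - 2 * (p₃ τ * p₂ τ + p₃ τ * p₄ τ - p₂ τ * p₄ τ) := ⟨_, rfl⟩
  obtain ⟨g₄, hg₄⟩ : ∃ g : ℂ → ℂ, g = fun τ =>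
    deriv p₄ τ - 2 * (p₄ τ * p₂ τ + p₄ τ * p₃ τ - p₂ τ * p₃ τ) := ⟨_, rfl⟩
  have D₂ : DifferentiableOn ℂ g₂ U := by
    have := differentiableOn_deriv d₂
    rw [hg₂]; fun_prop
  have D₃ : DifferentiableOn ℂ g₃ U := by
    have := differentiableOn_deriv d₃
    rw [hg₃]; fun_prop
  have D₄ : DifferentiableOn ℂ g₄ U := by
    have := differentiableOn_deriv d₄
    rw [hg₄]; fun_prop
  have gT₂ : ∀ τ ∈ U, g₂ (τ + 1) = g₂ τ := fun τ h => by
    simp only [hg₂, deriv_T T₂ h, T₂ τ h, T₃ τ h, T₄ τ h]; ring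
  have gT₃ : ∀ τ ∈ U, g₃ (τ + 1) = g₄ τ := fun τ h => by
    simp only [hg₃, hg₄, deriv_T T₃ h, T₂ τ h, T₃ τ h, T₄ τ h]
  have gT₄ : ∀ τ ∈ U, g₄ (τ + 1) = g₃ τ := fun τ h => by
    simp only [hg₃, hg₄, deriv_T T₄ h, T₂ τ h, T₃ τ h, T₄ τ h]
  have gS₂ : ∀ τ ∈ U, g₂ (-1 / τ) = τ ^ 4 * g₄ τ := fun τ h => by
    simp only [hg₂, hg₄, deriv_S_two h d₂ d₄ S₂, S₂ τ h, S₃ τ h, S₄ τ h]; ring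
  have gS₃ : ∀ τ ∈ U, g₃ (-1 / τ) = τ ^ 4 * g₃ τ := fun τ h => by
    simp only [hg₃, deriv_S_two h d₃ d₃ S₃, S₂ τ h, S₃ τ h, S₄ τ h]; ring
  have gS₄ : ∀ τ ∈ U, g₄ (-1 / τ) = τ ^ 4 * g₂ τ := fun τ h => by
    simp only [hg₂, hg₄, deriv_S_two h d₄ d₂ S₄, S₂ τ h, S₃ τ h, S₄ τ h]; ring
  have L₂ : Tendsto g₂ atI (𝓝 0) := by
    rw [hg₂]
    have := (tendsto_deriv _ _ d₂ l₂).sub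
      ((((l₂.mul l₃).add (l₂.mul l₄)).sub (l₃.mul l₄)).const_mul 2)
    simpa using this
  have L₃ : Tendsto g₃ atI (𝓝 0) := by
    rw [hg₃]
    have := (tendsto_deriv _ _ d₃ l₃).sub
      ((((l₃.mul l₂).add (l₃.mul l₄)).sub (l₂.mul l₄)).const_mul 2)
    simpa using this
  have L₄ : Tendsto g₄ atI (𝓝 0) := by
    rw [hg₄]
    have := (tendsto_deriv _ _ d₄ l₄).sub
      ((((l₄.mul l₂).add (l₄.mul l₃)).sub (l₂.mul l₃)).const_mul 2)
    simpa using this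
  have e1 := cusp_zero 4 (by norm_num) (fun τ => g₂ τ + g₃ τ + g₄ τ) (by fun_prop)
    (fun τ h => by simp only [gT₂ τ h, gT₃ τ h, gT₄ τ h]; ring)
    (fun τ h => by simp only [gS₂ τ h, gS₃ τ h, gS₄ τ h]; ring)
    (by simpa using (L₂.add L₃).add L₄)
  have e2 := cusp_zero 8 (by norm_num) (fun τ => g₂ τ ^ 2 + g₃ τ ^ 2 + g₄ τ ^ 2) (by fun_prop)
    (fun τ h => by simp only [gT₂ τ h, gT₃ τ h, gT₄ τ h]; ring)
    (fun τ h => by simp only [gS₂ τ h, gS₃ τ h, gS₄ τ h]; ring)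
    (by simpa using ((L₂.pow 2).add (L₃.pow 2)).add (L₄.pow 2))
  obtain ⟨r, hr⟩ : ∃ r : ℂ, r ^ 2 = -3 := IsAlgClosed.exists_pow_nat_eq _ (by norm_num)
  have hr0 : r ≠ 0 := by
    rintro rfl
    norm_num at hr
  have hfac : ∀ τ ∈ U, (g₃ τ - g₄ τ - r * g₂ τ) * (g₃ τ - g₄ τ + r * g₂ τ) = 0 := by
    intro τ h
    have h1 := e1 τ h
    have h2 := e2 τ h
    have h3 : g₂ τ = -(g₃ τ + g₄ τ) := by linear_combination h1
    rw [h3] at h2 ⊢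
    linear_combination 2 * h2 - (g₃ τ + g₄ τ) ^ 2 * hr
  have hpre : IsPreconnected U := (convex_halfSpace_im_gt 0).isPreconnected
  have han : ∀ s : ℂ, AnalyticOnNhd ℂ (fun τ => g₃ τ - g₄ τ + s * g₂ τ) U := fun s =>
    DifferentiableOn.analyticOnNhd (by fun_prop) isOpen_U
  have hcase : ∃ s : ℂ, s ≠ 0 ∧ ∀ τ ∈ U, g₃ τ - g₄ τ + s * g₂ τ = 0 := by
    have := AnalyticOnNhd.eq_zero_or_eq_zero_of_mul_eq_zero (han (-r)) (han r)
      (fun τ h => by have := hfac τ h; linear_combination this) hpre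
    rcases this with h | h
    · exact ⟨-r, neg_ne_zero.mpr hr0, h⟩
    · exact ⟨r, hr0, h⟩
  obtain ⟨s, hs, hz⟩ := hcase
  intro τ h
  have z1 := hz τ h
  have z2 := hz (τ + 1) (mem_add_one h)
  rw [gT₂ τ h, gT₃ τ h, gT₄ τ h] at z2
  have h1 := e1 τ h
  have k2 : g₂ τ = 0 := by
    have : s * g₂ τ = 0 := by linear_combination (z1 + z2) / 2
    exact (mul_eq_zero.mp this).resolve_left hs
  have k3 : g₃ τ = 0 := by
    rw [k2] at z1 h1
    linear_combination (z1 + h1) / 2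
  have k4 : g₄ τ = 0 := by
    rw [k2, k3] at h1
    linear_combination h1
  simp only [hg₂, hg₃, hg₄] at k2 k3 k4
  exact ⟨sub_eq_zero.mp k2, sub_eq_zero.mp k3, sub_eq_zero.mp k4⟩

/-! ### The three theta constants -/

/-- The normalised even-characteristic theta constant `e^{-πiτ/4} θ₂(τ)`. -/
def V (τ : ℂ) : ℂ := jacobiTheta₂ (τ / 2) τ

/-- Eighth power of `θ₃`. -/
def A₃ (τ : ℂ) : ℂ := jacobiTheta₂ 0 τ ^ 8

/-- Eighth power of `θ₄`. -/
def A₄ (τ : ℂ) : ℂ := jacobiTheta₂ (1 / 2) τ ^ 8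

/-- Eighth power of `θ₂`. -/
def A₂ (τ : ℂ) : ℂ := cexp (2 * Real.pi * I * τ) * V τ ^ 8

lemma exp_even {m : ℤ} (h : Even m) : cexp (Real.pi * I * m) = 1 := by
  obtain ⟨k, rfl⟩ := h
  rw [Complex.exp_eq_one_iff]
  exact ⟨k, by push_cast; ring⟩

lemma term_congr {m : ℤ} (h : Even m) {x y : ℂ} (hxy : x = y + Real.pi * I * m) :
    cexp x = cexp y := by
  rw [hxy, Complex.exp_add, exp_even h, mul_one]

lemma theta_T₃ (τ : ℂ) : jacobiTheta₂ 0 (τ + 1) = jacobiTheta₂ (1 / 2) τ := by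
  unfold jacobiTheta₂ jacobiTheta₂_term
  refine tsum_congr fun n => ?_
  refine term_congr (m := n * (n - 1)) (Int.even_mul_pred_self n) ?_
  push_cast; ring

lemma theta_T₄ (τ : ℂ) : jacobiTheta₂ (1 / 2) (τ + 1) = jacobiTheta₂ 0 τ := by
  unfold jacobiTheta₂ jacobiTheta₂_term
  refine tsum_congr fun n => ?_
  refine term_congr (m := n * (n + 1)) (Int.even_mul_succ_self n) ?_
  push_cast; ring

lemma V_T (τ : ℂ) : V (τ + 1) = V τ := by
  unfold V jacobiTheta₂ jacobiTheta₂_term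
  refine tsum_congr fun n => ?_
  refine term_congr (m := n * (n + 1)) (Int.even_mul_succ_self n) ?_
  push_cast; ring

lemma A_T₃ (τ : ℂ) (_ : τ ∈ U) : A₃ (τ + 1) = A₄ τ := by rw [A₃, A₄, theta_T₃]

lemma A_T₄ (τ : ℂ) (_ : τ ∈ U) : A₄ (τ + 1) = A₃ τ := by rw [A₃, A₄, theta_T₄]

lemma A_T₂ (τ : ℂ) (_ : τ ∈ U) : A₂ (τ + 1) = A₂ τ := by
  rw [A₂, A₂, V_T]
  congr 1
  refine term_congr (m := 2) (by decide) ?_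
  push_cast; ring

lemma sqrt_pow {τ : ℂ} (h : τ ∈ U) : (1 / (-I * τ) ^ (1 / 2 : ℂ)) ^ 8 = 1 / τ ^ 4 := by
  have h0 := ne_zero_of_mem h
  rw [div_pow, one_pow, ← Complex.cpow_nat_mul]
  have : ((8 : ℕ) : ℂ) * (1 / 2) = ((4 : ℕ) : ℂ) := by norm_num
  rw [this, Complex.cpow_natCast, mul_pow, Even.neg_pow (by decide), I_pow_four, one_mul]

lemma A_S₃ (τ : ℂ) (h : τ ∈ U) : A₃ (-1 / τ) = τ ^ 4 * A₃ τ := by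
  have h0 := ne_zero_of_mem h
  have := jacobiTheta₂_functional_equation 0 τ
  rw [A₃, A₃, this, mul_pow, mul_pow, sqrt_pow h]
  simp
  field_simp

lemma A_S₄ (τ : ℂ) (h : τ ∈ U) : A₄ (-1 / τ) = τ ^ 4 * A₂ τ := by
  have h0 := ne_zero_of_mem h
  have := jacobiTheta₂_functional_equation (τ / 2) τ
  rw [A₄, A₂, V, this, mul_pow, mul_pow, sqrt_pow h, ← Complex.exp_nat_mul]
  have e1 : τ / 2 / τ = 1 / 2 := by field_simp
  have e2 : ((8 : ℕ) : ℂ) * (-Real.pi * I * (τ / 2) ^ 2 / τ) = - (2 * Real.pi * I * τ) := by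
    push_cast; field_simp; ring
  rw [e1, e2, Complex.exp_neg]
  have := Complex.exp_ne_zero (2 * Real.pi * I * τ)
  field_simp

lemma A_S₂ (τ : ℂ) (h : τ ∈ U) : A₂ (-1 / τ) = τ ^ 4 * A₄ τ := by
  have h0 := ne_zero_of_mem h
  have := A_S₄ _ (mem_S h)
  have e : -1 / (-1 / τ) = τ := by field_simp
  rw [e] at this
  rw [this]
  field_simp

lemma d_theta (z : ℂ) : DifferentiableOn ℂ (jacobiTheta₂ z) U := fun _ h =>
  (differentiableAt_jacobiTheta₂_snd z h).differentiableWithinAt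

lemma d_V : DifferentiableOn ℂ V U := fun τ h => by
  have h1 : DifferentiableAt ℂ (fun p : ℂ × ℂ => jacobiTheta₂ p.1 p.2) (τ / 2, τ) :=
    (hasFDerivAt_jacobiTheta₂ (τ / 2) h).differentiableAt
  have h2 : DifferentiableAt ℂ (fun t : ℂ => ((t / 2, t) : ℂ × ℂ)) τ := by fun_prop
  exact (DifferentiableAt.comp (g := fun p : ℂ × ℂ => jacobiTheta₂ p.1 p.2)
    (f := fun t : ℂ => ((t / 2, t) : ℂ × ℂ)) τ h1 h2).differentiableWithinAt

lemma d_A₃ : DifferentiableOn ℂ A₃ U := (d_theta 0).pow 8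

lemma d_A₄ : DifferentiableOn ℂ A₄ U := (d_theta (1 / 2)).pow 8

lemma d_A₂ : DifferentiableOn ℂ A₂ U := by
  have := d_V
  unfold A₂
  fun_prop

lemma tendsto_im : Tendsto Complex.im atI atTop := tendsto_comap

lemma l_theta₃ : Tendsto (jacobiTheta₂ 0) atI (𝓝 1) := by
  have h := isBigO_at_im_infty_jacobiTheta_sub_one
  have h1 : Tendsto (fun τ : ℂ => Real.exp (-Real.pi * τ.im)) atI (𝓝 0) :=
    Real.tendsto_exp_atBot.comp
      (tendsto_im.const_mul_atTop_of_neg (neg_lt_zero.mpr Real.pi_pos))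
  have h2 := (h.trans_tendsto h1).add_const 1
  rw [zero_add] at h2
  refine h2.congr fun τ => ?_
  rw [sub_add_cancel, jacobiTheta_eq_jacobiTheta₂]

lemma l_theta₄ : Tendsto (jacobiTheta₂ (1 / 2)) atI (𝓝 1) := by
  have := l_theta₃.comp tendsto_add_one
  refine this.congr fun τ => ?_
  simp only [Function.comp, theta_T₃]

lemma l_A₃ : Tendsto A₃ atI (𝓝 1) := by
  have := l_theta₃.pow 8
  rw [one_pow] at this
  exact this

lemma l_A₄ : Tendsto A₄ atI (𝓝 1) := by
  have := l_theta₄.pow 8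
  rw [one_pow] at this
  exact this

lemma norm_V_term (n : ℤ) (τ : ℂ) :
    ‖jacobiTheta₂_term n (τ / 2) τ‖ = Real.exp (-(Real.pi * ((n * (n + 1) : ℤ) : ℝ)) * τ.im) := by
  rw [norm_jacobiTheta₂_term]
  congr 1
  have : (τ / 2).im = τ.im / 2 := by simp
  rw [this]
  push_cast
  ring

lemma int_nonneg (n : ℤ) : 0 ≤ n * (n + 1) := by
  rcases le_or_gt 0 n with h | h
  · positivity
  · nlinarith

lemma l_V : Tendsto V atI (𝓝 2) := by
  have hsum : Summable fun n : ℤ => ‖jacobiTheta₂_term n (I / 2) I‖ :=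
    ((summable_jacobiTheta₂_term_iff (I / 2) I).mpr (by simp)).norm
  have key := tendsto_tsum_of_dominated_convergence (𝓕 := atI)
    (f := fun τ n => jacobiTheta₂_term n (τ / 2) τ)
    (g := fun n : ℤ => if n ∈ ({0, -1} : Finset ℤ) then (1 : ℂ) else 0) hsum ?_ ?_
  · have e : ∑' n : ℤ, (if n ∈ ({0, -1} : Finset ℤ) then (1 : ℂ) else 0) = 2 := by
      rw [tsum_eq_sum (s := {0, -1}) (fun n hn => if_neg hn), Finset.sum_pair (by decide)]
      norm_num
    rw [e] at key
    exact key
  · intro n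
    by_cases hn : n ∈ ({0, -1} : Finset ℤ)
    · rw [if_pos hn]
      refine tendsto_const_nhds.congr fun τ => ?_
      simp only [Finset.mem_insert, Finset.mem_singleton] at hn
      rcases hn with rfl | rfl
      · simp [jacobiTheta₂_term]
      · rw [jacobiTheta₂_term, eq_comm]
        convert Complex.exp_zero using 2
        push_cast; ring
    · rw [if_neg hn, tendsto_zero_iff_norm_tendsto_zero]
      simp only [norm_V_term]
      refine Real.tendsto_exp_atBot.comp (tendsto_im.const_mul_atTop_of_neg ?_)
      have h1 : 0 < n * (n + 1) := by
        refine lt_of_le_of_ne (int_nonneg n) (Ne.symm ?_)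
        intro h
        rcases mul_eq_zero.mp h with h | h
        · simp [h] at hn
        · have : n = -1 := by omega
          simp [this] at hn
      have h2 : (0 : ℝ) < ((n * (n + 1) : ℤ) : ℝ) := by exact_mod_cast h1
      have := mul_pos Real.pi_pos h2
      linarith
  · filter_upwards [tendsto_im.eventually_ge_atTop 1] with τ hτ n
    rw [norm_V_term, norm_V_term]
    apply Real.exp_le_exp.mpr
    have h2 : (0 : ℝ) ≤ ((n * (n + 1) : ℤ) : ℝ) := by exact_mod_cast int_nonneg n
    have := mul_nonneg Real.pi_pos.le h2
    rw [Complex.I_im]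
    nlinarith

lemma l_V8 : Tendsto (fun τ => V τ ^ 8) atI (𝓝 256) := by
  have := l_V.pow 8
  norm_num at this
  exact this

lemma l_exp : Tendsto (fun τ => cexp (2 * Real.pi * I * τ)) atI (𝓝 0) := by
  rw [tendsto_zero_iff_norm_tendsto_zero]
  have : ∀ τ : ℂ, ‖cexp (2 * Real.pi * I * τ)‖ = Real.exp (-(2 * Real.pi) * τ.im) := by
    intro τ
    rw [Complex.norm_exp]
    congr 1
    simp
  simp only [this]
  refine Real.tendsto_exp_atBot.comp (tendsto_im.const_mul_atTop_of_neg ?_)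
  linarith [Real.pi_pos]

lemma l_A₂ : Tendsto A₂ atI (𝓝 0) := by
  have := l_exp.mul l_V8
  rw [zero_mul] at this
  exact this

lemma A_ne_zero : ∀ τ ∈ U, A₂ τ * A₃ τ * A₄ τ ≠ 0 := by
  refine cusp_twelve (fun τ => A₂ τ * A₃ τ * A₄ τ) ((d_A₂.mul d_A₃).mul d_A₄) ?_ ?_ ?_ ?_
  · intro τ h
    simp only [A_T₂ τ h, A_T₃ τ h, A_T₄ τ h]; ring
  · intro τ h
    simp only [A_S₂ τ h, A_S₃ τ h, A_S₄ τ h]; ring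
  · simpa using (l_A₂.mul l_A₃).mul l_A₄
  · have := atI_neBot
    have h3 := l_A₃.eventually_ne one_ne_zero
    have h4 := l_A₄.eventually_ne one_ne_zero
    have h2 := l_V8.eventually_ne (by norm_num : (256 : ℂ) ≠ 0)
    obtain ⟨τ, hU, h2, h3, h4⟩ := (eventually_U.and (h2.and (h3.and h4))).exists
    exact ⟨τ, hU, mul_ne_zero (mul_ne_zero (mul_ne_zero (Complex.exp_ne_zero _) h2) h3) h4⟩

lemma A₂_ne (τ : ℂ) (h : τ ∈ U) : A₂ τ ≠ 0 := fun h0 => A_ne_zero τ h (by simp [h0])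

lemma A₃_ne (τ : ℂ) (h : τ ∈ U) : A₃ τ ≠ 0 := fun h0 => A_ne_zero τ h (by simp [h0])

lemma A₄_ne (τ : ℂ) (h : τ ∈ U) : A₄ τ ≠ 0 := fun h0 => A_ne_zero τ h (by simp [h0])

/-- One eighth of the logarithmic derivative. -/
def ld (f : ℂ → ℂ) (τ : ℂ) : ℂ := deriv f τ / (8 * f τ)

lemma d_ld {f : ℂ → ℂ} (hf : DifferentiableOn ℂ f U) (h0 : ∀ τ ∈ U, f τ ≠ 0) :
    DifferentiableOn ℂ (ld f) U :=
  (differentiableOn_deriv hf).div (hf.const_mul 8)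
    (fun τ h => mul_ne_zero (by norm_num) (h0 τ h))

lemma ld_T {f g : ℂ → ℂ} (h : ∀ τ ∈ U, f (τ + 1) = g τ) (τ : ℂ) (hτ : τ ∈ U) :
    ld f (τ + 1) = ld g τ := by
  rw [ld, ld, deriv_T h hτ, h τ hτ]

lemma l_ld {f : ℂ → ℂ} {c : ℂ} (hf : DifferentiableOn ℂ f U) (h : Tendsto f atI (𝓝 c))
    (hc : c ≠ 0) : Tendsto (ld f) atI (𝓝 0) := by
  have := (tendsto_deriv f c hf h).div (h.const_mul 8) (mul_ne_zero (by norm_num) hc)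
  rw [zero_div] at this
  exact this

lemma l_ld₂ : Tendsto (ld A₂) atI (𝓝 (2 * Real.pi * I / 8)) := by
  have h1 := (l_ld (d_V.pow 8) l_V8 (by norm_num)).const_add (2 * Real.pi * I / 8)
  rw [add_zero] at h1
  refine h1.congr' ?_
  filter_upwards [eventually_U] with τ h
  have hne := A₂_ne τ h
  have hV : V τ ^ 8 ≠ 0 := fun h0 => hne (by rw [A₂, h0, mul_zero])
  have hE := Complex.exp_ne_zero (2 * Real.pi * I * τ)
  have hd : HasDerivAt (V ^ 8) (deriv (V ^ 8) τ) τ :=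
    ((d_V.pow 8).differentiableAt (isOpen_U.mem_nhds h)).hasDerivAt
  have hA : HasDerivAt A₂ (cexp (2 * Real.pi * I * τ) * (2 * Real.pi * I) * V τ ^ 8 +
      cexp (2 * Real.pi * I * τ) * deriv (V ^ 8) τ) τ := by
    have := ((((hasDerivAt_id τ).const_mul (2 * Real.pi * I)).cexp)).mul hd
    convert! this using 1
    simp
  rw [ld, ld, hA.deriv, A₂, Pi.pow_apply]
  field_simp
  rw [add_div, mul_div_assoc, div_self hV, mul_one]

lemma halphen_theta : ∀ τ ∈ U,
    deriv (ld A₂) τ = 2 * (ld A₂ τ * ld A₃ τ + ld A₂ τ * ld A₄ τ - ld A₃ τ * ld A₄ τ) ∧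
    deriv (ld A₃) τ = 2 * (ld A₃ τ * ld A₂ τ + ld A₃ τ * ld A₄ τ - ld A₂ τ * ld A₄ τ) ∧
    deriv (ld A₄) τ = 2 * (ld A₄ τ * ld A₂ τ + ld A₄ τ * ld A₃ τ - ld A₂ τ * ld A₃ τ) :=
  halphen (d_ld d_A₂ A₂_ne) (d_ld d_A₃ A₃_ne) (d_ld d_A₄ A₄_ne)
    (ld_T A_T₂) (ld_T A_T₃) (ld_T A_T₄)
    (fun _ h => logDeriv_S h d_A₂ d_A₄ A₄_ne A_S₂)
    (fun _ h => logDeriv_S h d_A₃ d_A₃ A₃_ne A_S₃)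
    (fun _ h => logDeriv_S h d_A₄ d_A₂ A₂_ne A_S₄)
    l_ld₂ (l_ld d_A₃ l_A₃ one_ne_zero) (l_ld d_A₄ l_A₄ one_ne_zero)

lemma theta_eq : θ = jacobiTheta₂ 0 := by
  ext τ
  simp [θ, jacobiTheta₂, jacobiTheta₂_term]

lemma d_θ : DifferentiableOn ℂ θ U := theta_eq ▸ d_theta 0

lemma deriv_θ {τ : ℂ} (h : τ ∈ U) : HasDerivAt θ (θ τ * ld A₃ τ) τ := by
  have hd := (d_θ.differentiableAt (isOpen_U.mem_nhds h)).hasDerivAt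
  have hA : A₃ = fun t => θ t ^ 8 := by
    ext t; rw [A₃, theta_eq]
  have h8 : HasDerivAt A₃ (8 * θ τ ^ 7 * deriv θ τ) τ := by
    rw [hA]
    have := hd.pow 8
    convert! this using 1
  have h0 : θ τ ≠ 0 := by
    intro h0
    apply A₃_ne τ h
    rw [hA]
    simp [h0]
  have e : θ τ * ld A₃ τ = deriv θ τ := by
    rw [ld, h8.deriv, hA]
    field_simp
  rw [e]
  exact hd

/-- Second derivative polynomial. -/
def P₂ (a b c : ℂ) : ℂ := 2 * a * b + 2 * a * c - 2 * b * c + a ^ 2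

/-- Third derivative polynomial. -/
def P₃ (a b c : ℂ) : ℂ := 8 * a * b ^ 2 + 2 * a * b * c - 8 * b ^ 2 * c + 8 * a * c ^ 2
  - 8 * b * c ^ 2 + 6 * a ^ 2 * b + 6 * a ^ 2 * c + a ^ 3

/-- Fourth derivative polynomial. -/
def P₄ (a b c : ℂ) : ℂ := 32 * a * b ^ 3 + 8 * a * b ^ 2 * c - 32 * b ^ 3 * c + 60 * a ^ 2 * b ^ 2
  + 12 * a ^ 2 * b * c + 8 * a * b * c ^ 2 - 68 * b ^ 2 * c ^ 2 + 60 * a ^ 2 * c ^ 2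
  + 32 * a * c ^ 3 - 32 * b * c ^ 3 + 12 * a ^ 3 * b + 12 * a ^ 3 * c + a ^ 4

section alg
variable {t a b c : ℂ → ℂ} {τ : ℂ}

lemma step₁ (ht : HasDerivAt t (t τ * a τ) τ)
    (ha : HasDerivAt a (2 * (a τ * b τ + a τ * c τ - b τ * c τ)) τ) :
    HasDerivAt (fun τ => t τ * a τ) (t τ * P₂ (a τ) (b τ) (c τ)) τ := by
  convert! ht.mul ha using 1
  rw [P₂]; ring

lemma step₂ (ht : HasDerivAt t (t τ * a τ) τ)
    (ha : HasDerivAt a (2 * (a τ * b τ + a τ * c τ - b τ * c τ)) τ)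
    (hb : HasDerivAt b (2 * (b τ * a τ + b τ * c τ - a τ * c τ)) τ)
    (hc : HasDerivAt c (2 * (c τ * a τ + c τ * b τ - a τ * b τ)) τ) :
    HasDerivAt (fun τ => t τ * P₂ (a τ) (b τ) (c τ)) (t τ * P₃ (a τ) (b τ) (c τ)) τ := by
  unfold P₂
  convert! ht.mul (((((ha.const_mul 2).mul hb).add ((ha.const_mul 2).mul hc)).sub
    ((hb.const_mul 2).mul hc)).add (ha.pow 2)) using 1
  simp [P₃]; ring

lemma step₃ (ht : HasDerivAt t (t τ * a τ) τ)
    (ha : HasDerivAt a (2 * (a τ * b τ + a τ * c τ - b τ * c τ)) τ)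
    (hb : HasDerivAt b (2 * (b τ * a τ + b τ * c τ - a τ * c τ)) τ)
    (hc : HasDerivAt c (2 * (c τ * a τ + c τ * b τ - a τ * b τ)) τ) :
    HasDerivAt (fun τ => t τ * P₃ (a τ) (b τ) (c τ)) (t τ * P₄ (a τ) (b τ) (c τ)) τ := by
  unfold P₃
  convert! ht.mul ((((((((ha.const_mul 8).mul (hb.pow 2)).add
    (((ha.const_mul 2).mul hb).mul hc)).sub (((hb.pow 2).const_mul 8).mul hc)).add
    ((ha.const_mul 8).mul (hc.pow 2))).sub ((hb.const_mul 8).mul (hc.pow 2))).add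
    (((ha.pow 2).const_mul 6).mul hb)).add (((ha.pow 2).const_mul 6).mul hc) |>.add
    (ha.pow 3)) using 1
  simp [P₄]; ring

end alg

lemma deriv_congr {f g : ℂ → ℂ} (h : ∀ τ ∈ U, f τ = g τ) {τ g' : ℂ} (hτ : τ ∈ U)
    (hg : HasDerivAt g g' τ) : deriv f τ = g' := by
  rw [EventuallyEq.deriv_eq (eventually_of_mem (isOpen_U.mem_nhds hτ) h), hg.deriv]

end ThetaODE

/-- The Jacobi theta constant satisfies a fourth-order nonlinear ODE
(derivatives are ordinary derivatives with respect to `τ`). -/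
theorem theta_fourth_order_ODE :
    ∀ τ : ℂ, 0 < τ.im →
      θ τ ^ 3 * (θ τ * deriv (deriv θ) τ - 3 * (deriv θ τ) ^ 2) *
          deriv (deriv (deriv (deriv θ))) τ -
        θ τ ^ 4 * (deriv (deriv (deriv θ)) τ) ^ 2 +
        2 * θ τ ^ 2 * deriv θ τ * (θ τ * deriv (deriv θ) τ + 12 * (deriv θ τ) ^ 2) *
          deriv (deriv (deriv θ)) τ +
        θ τ ^ 3 * (deriv (deriv θ) τ) ^ 3 -
        24 * θ τ ^ 2 * (deriv θ τ) ^ 2 * (deriv (deriv θ) τ) ^ 2 -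
        18 * θ τ * (deriv θ τ) ^ 4 * deriv (deriv θ) τ +
        18 * (deriv θ τ) ^ 6 = 0 := by
  intro τ hτ
  have hU : τ ∈ ThetaODE.U := hτ
  have H : ∀ (p : ℂ → ℂ), DifferentiableOn ℂ p ThetaODE.U → ∀ s ∈ ThetaODE.U,
      HasDerivAt p (deriv p s) s := fun p hp s hs =>
    (hp.differentiableAt (ThetaODE.isOpen_U.mem_nhds hs)).hasDerivAt
  have ha := H _ (ThetaODE.d_ld ThetaODE.d_A₃ ThetaODE.A₃_ne)
  have hb := H _ (ThetaODE.d_ld ThetaODE.d_A₂ ThetaODE.A₂_ne)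
  have hc := H _ (ThetaODE.d_ld ThetaODE.d_A₄ ThetaODE.A₄_ne)
  have ha' := fun s hs => (ThetaODE.halphen_theta s hs).2.1 ▸ ha s hs
  have hb' := fun s hs => (ThetaODE.halphen_theta s hs).1 ▸ hb s hs
  have hc' : ∀ s ∈ ThetaODE.U, HasDerivAt (ThetaODE.ld ThetaODE.A₄)
      (2 * (ThetaODE.ld ThetaODE.A₄ s * ThetaODE.ld ThetaODE.A₃ s +
        ThetaODE.ld ThetaODE.A₄ s * ThetaODE.ld ThetaODE.A₂ s -
        ThetaODE.ld ThetaODE.A₃ s * ThetaODE.ld ThetaODE.A₂ s)) s := fun s hs => by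
    convert hc s hs using 1
    rw [(ThetaODE.halphen_theta s hs).2.2]
    ring
  have D1 := fun s (hs : s ∈ ThetaODE.U) => (ThetaODE.deriv_θ hs).deriv
  have D2 := fun s (hs : s ∈ ThetaODE.U) => ThetaODE.deriv_congr D1 hs
    (ThetaODE.step₁ (ThetaODE.deriv_θ hs) (ha' s hs))
  have D3 := fun s (hs : s ∈ ThetaODE.U) => ThetaODE.deriv_congr D2 hs
    (ThetaODE.step₂ (ThetaODE.deriv_θ hs) (ha' s hs) (hb' s hs) (hc' s hs))
  have D4 := fun s (hs : s ∈ ThetaODE.U) => ThetaODE.deriv_congr D3 hs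
    (ThetaODE.step₃ (ThetaODE.deriv_θ hs) (ha' s hs) (hb' s hs) (hc' s hs))
  rw [D4 τ hU, D3 τ hU, D2 τ hU, D1 τ hU, ThetaODE.P₂, ThetaODE.P₃, ThetaODE.P₄]
  ring
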